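/- Let b₀ be the unique real root of 4π² + 2b + b² − 2b·e^b, and for each integer n ≥ 3 let F_n(x) = −2cos(2π/n) + 2x + n·x^{n−1} + 2cos(2π/n)(1−n)·x^n − (2−n)·x^{n+1}. Then there exists a constant C > 0 such that for all integers n ≥ 3, |F_n(1 − b₀/n)| ≤ C/n². -/

import Mathlib

/-!
Write `c = cos (2π/n)` and `x = 1 - b/n`. Factoring out the smallest power of `x` gives
`F_n(x) = 2(x - c) + x^(n-1) Q`, where `Q = n + 2c(1-n)x - (2-n)x²`. Taylor expansion of the cosine
yields `2(x - c) = -2b/n + O(1/n²)` and `Q = (4π² + 2b + b²)/n + O(1/n²)`: the terms of order `n`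
and `1` in `Q` cancel. Since `x^(n-1) = e^(-b) + O(1/n)`, the coefficient of `1/n` in `F_n(x)` is
`e^(-b) (4π² + 2b + b² - 2b e^b)`, which vanishes at `b = b₀`.
-/

open Real

/-- `F_n(x) = −2cos(2π/n) + 2x + n·x^{n−1} + 2cos(2π/n)(1−n)·x^n − (2−n)·x^{n+1}` on `ℝ`. -/
noncomputable def F (n : ℕ) (x : ℝ) : ℝ :=
  -2 * Real.cos (2 * π / n) + 2 * x + (n : ℝ) * x ^ (n - 1)
    + 2 * Real.cos (2 * π / n) * (1 - (n : ℝ)) * x ^ n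
    - (2 - (n : ℝ)) * x ^ (n + 1)

open Filter Asymptotics
open scoped Topology

lemma cos_sub_one_sub_sq_div_two_isBigO :
    (fun x : ℝ => cos x - (1 - x ^ 2 / 2)) =O[𝓝 0] (fun x : ℝ => x ^ 4) := by
  refine IsBigO.of_bound (5 / 96) ?_
  filter_upwards [Metric.closedBall_mem_nhds (0 : ℝ) one_pos] with x hx
  have hx_abs : |x| ≤ 1 := by simpa [Real.dist_eq] using hx
  simpa only [norm_eq_abs, abs_pow, mul_comm] using cos_bound hx_abs

lemma log_one_add_sub_self_isBigO :
    (fun x : ℝ => log (1 + x) - x) =O[𝓝 0] (fun x : ℝ => x ^ 2) := by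
  refine IsBigO.of_bound 2 ?_
  filter_upwards [Metric.ball_mem_nhds (0 : ℝ) one_half_pos] with x hx
  have hx_abs : |x| < 1 / 2 := by simpa [Real.dist_eq] using hx
  have hbound : |log (1 + x) - x| ≤ |x| ^ 2 / (1 - |x|) := by
    simpa [neg_add_eq_sub] using
      abs_log_sub_add_sum_range_le (x := -x) (by rw [abs_neg]; linarith) 1
  calc ‖log (1 + x) - x‖ ≤ |x| ^ 2 / (1 - |x|) := hbound
    _ ≤ |x| ^ 2 / (1 / 2) := by gcongr; linarith
    _ = 2 * ‖x ^ 2‖ := by rw [norm_eq_abs, abs_pow]; ring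

lemma inv_natCast_pow_isBigO_of_le {j k : ℕ} (hjk : j ≤ k) :
    (fun n : ℕ => (n : ℝ)⁻¹ ^ k) =O[atTop] (fun n : ℕ => (n : ℝ)⁻¹ ^ j) := by
  refine IsBigO.of_norm_eventuallyLE ?_
  filter_upwards [eventually_ge_atTop 1] with n hn
  rw [norm_eq_abs, abs_of_nonneg (by positivity)]
  exact pow_le_pow_of_le_one (by positivity) (inv_le_one_of_one_le₀ (mod_cast hn)) hjk

lemma isBigO_comp_div_natCast {E : Type*} [Norm E] {f : ℝ → E} {k : ℕ}
    (hf : f =O[𝓝 0] (fun x : ℝ => x ^ k)) (t : ℝ) :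
    (fun n : ℕ => f (t / n)) =O[atTop] (fun n : ℕ => (n : ℝ)⁻¹ ^ k) := by
  refine (hf.comp_tendsto (tendsto_const_div_atTop_nhds_zero_nat t)).trans ?_
  simpa only [Function.comp_def, div_eq_mul_inv, mul_pow] using
    (isBigO_refl (fun n : ℕ => (n : ℝ)⁻¹ ^ k) atTop).const_mul_left (t ^ k)

lemma natCast_mul_isBigO {f : ℕ → ℝ} {k : ℕ}
    (hf : f =O[atTop] (fun n : ℕ => (n : ℝ)⁻¹ ^ (k + 1))) :
    (fun n : ℕ => (n : ℝ) * f n) =O[atTop] (fun n : ℕ => (n : ℝ)⁻¹ ^ k) := by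
  refine ((isBigO_refl (fun n : ℕ => (n : ℝ)) atTop).mul hf).congr' .rfl ?_
  filter_upwards [eventually_ne_atTop 0] with n hn
  rw [pow_succ', mul_inv_cancel_left₀ (mod_cast hn)]

lemma natCast_sub_mul_log_one_add_div_sub_isBigO (t : ℝ) (k : ℕ) :
    (fun n : ℕ => ((n - k : ℕ) : ℝ) * log (1 + t / n) - t) =O[atTop]
      (fun n : ℕ => (n : ℝ)⁻¹) := by
  have hlog_sub : (fun n : ℕ => log (1 + t / n) - t / n) =O[atTop]
      (fun n : ℕ => (n : ℝ)⁻¹ ^ 2) :=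
    isBigO_comp_div_natCast log_one_add_sub_self_isBigO t
  have hdiv : (fun n : ℕ => t / n) =O[atTop] (fun n : ℕ => (n : ℝ)⁻¹ ^ 1) := by
    simpa only [pow_one, div_eq_mul_inv] using
      (isBigO_refl (fun n : ℕ => (n : ℝ)⁻¹) atTop).const_mul_left t
  have hlog : (fun n : ℕ => log (1 + t / n)) =O[atTop] (fun n : ℕ => (n : ℝ)⁻¹ ^ 1) := by
    simpa only [sub_add_cancel] using
      (hlog_sub.trans (inv_natCast_pow_isBigO_of_le one_le_two)).add hdiv
  have hsum := (natCast_mul_isBigO hlog_sub).sub (hlog.const_mul_left (k : ℝ))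
  refine hsum.congr' ?_ (.of_eq (by simp only [pow_one]))
  filter_upwards [eventually_ge_atTop k, eventually_ne_atTop 0] with n hkn hn
  rw [Nat.cast_sub hkn]
  field_simp
  ring

lemma one_add_div_pow_sub_exp_isBigO (t : ℝ) (k : ℕ) :
    (fun n : ℕ => (1 + t / n) ^ (n - k) - exp t) =O[atTop] (fun n : ℕ => (n : ℝ)⁻¹) := by
  have hexponent := natCast_sub_mul_log_one_add_div_sub_isBigO t k
  have htendsto : Tendsto (fun n : ℕ => ((n - k : ℕ) : ℝ) * log (1 + t / n)) atTop (𝓝 t) :=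
    tendsto_sub_nhds_zero_iff.1 (hexponent.trans_tendsto tendsto_inv_atTop_nhds_zero_nat)
  refine (((hasDerivAt_exp t).isBigO_sub.comp_tendsto htendsto).trans hexponent).congr' ?_ .rfl
  have hbase : Tendsto (fun n : ℕ => 1 + t / n) atTop (𝓝 1) := by
    simpa only [add_zero] using (tendsto_const_div_atTop_nhds_zero_nat t).const_add 1
  filter_upwards [hbase.eventually_const_lt one_pos] with n hn
  simp only [Function.comp_apply, exp_nat_mul, exp_log hn]

/-- The cofactor `Q` of `x ^ (n - 1)` in `F n x`, with `c` in place of `cos (2π/n)` and a real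
parameter `n`. -/
noncomputable def powCofactor (c n x : ℝ) : ℝ :=
  n + 2 * c * (1 - n) * x - (2 - n) * x ^ 2

lemma F_eq_add_pow_mul_powCofactor {n : ℕ} (hn : n ≠ 0) (x : ℝ) :
    F n x = 2 * (x - cos (2 * π / n)) + x ^ (n - 1) * powCofactor (cos (2 * π / n)) n x := by
  obtain ⟨m, rfl⟩ := Nat.exists_eq_succ_of_ne_zero hn
  simp only [F, powCofactor, Nat.succ_eq_add_one, Nat.add_sub_cancel]
  ring

lemma cos_div_natCast_sub_isBigO (θ : ℝ) :
    (fun n : ℕ => cos (θ / n) - (1 - (θ / n) ^ 2 / 2)) =O[atTop]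
      (fun n : ℕ => (n : ℝ)⁻¹ ^ 4) :=
  isBigO_comp_div_natCast cos_sub_one_sub_sq_div_two_isBigO θ

lemma two_mul_one_sub_div_sub_cos_isBigO (θ b : ℝ) :
    (fun n : ℕ => 2 * ((1 - b / n) - cos (θ / n)) + 2 * b * (n : ℝ)⁻¹) =O[atTop]
      (fun n : ℕ => (n : ℝ)⁻¹ ^ 2) := by
  have hcos := (cos_div_natCast_sub_isBigO θ).trans
    (inv_natCast_pow_isBigO_of_le (by norm_num : 2 ≤ 4))
  have hsq := isBigO_refl (fun n : ℕ => (n : ℝ)⁻¹ ^ 2) atTop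
  refine ((hsq.const_mul_left (θ ^ 2)).sub (hcos.const_mul_left 2)).congr_left fun n => ?_
  ring

lemma powCofactor_one_sub_div_sub_isBigO (θ b : ℝ) :
    (fun n : ℕ => powCofactor (cos (θ / n)) n (1 - b / n) - (θ ^ 2 + 2 * b + b ^ 2) * (n : ℝ)⁻¹)
      =O[atTop] (fun n : ℕ => (n : ℝ)⁻¹ ^ 2) := by
  have hsq := isBigO_refl (fun n : ℕ => (n : ℝ)⁻¹ ^ 2) atTop
  have hcube := inv_natCast_pow_isBigO_of_le (by norm_num : 2 ≤ 3)
  set d : ℕ → ℝ := fun n => cos (θ / n) - (1 - (θ / n) ^ 2 / 2) with hd_def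
  have hd : d =O[atTop] (fun n : ℕ => (n : ℝ)⁻¹ ^ 4) := cos_div_natCast_sub_isBigO θ
  have hd_mul : (fun n : ℕ => d n - n * d n) =O[atTop] (fun n : ℕ => (n : ℝ)⁻¹ ^ 2) :=
    (hd.trans (inv_natCast_pow_isBigO_of_le (by norm_num))).sub
      ((natCast_mul_isBigO hd).trans hcube)
  have hx : (fun n : ℕ => 1 - b / n) =O[atTop] (fun _ => (1 : ℝ)) :=
    ((tendsto_const_div_atTop_nhds_zero_nat b).const_sub 1).isBigO_one ℝ
  have herror : (fun n : ℕ => (d n - n * d n) * (1 - b / n)) =O[atTop]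
      (fun n : ℕ => (n : ℝ)⁻¹ ^ 2) := by
    simpa only [mul_one] using hd_mul.mul hx
  refine (((herror.const_mul_left 2).sub
    (hsq.const_mul_left (2 * b ^ 2 + θ ^ 2 * b + θ ^ 2))).add
      (hcube.const_mul_left (θ ^ 2 * b))).congr' ?_ .rfl
  filter_upwards [eventually_ne_atTop 0] with n hn
  simp only [hd_def, powCofactor]
  field_simp
  ring

lemma powCofactor_one_sub_div_isBigO (θ b : ℝ) :
    (fun n : ℕ => powCofactor (cos (θ / n)) n (1 - b / n)) =O[atTop]
      (fun n : ℕ => (n : ℝ)⁻¹) := by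
  have hsq := inv_natCast_pow_isBigO_of_le one_le_two
  simp only [pow_one] at hsq
  have hinv := isBigO_refl (fun n : ℕ => (n : ℝ)⁻¹) atTop
  exact (((powCofactor_one_sub_div_sub_isBigO θ b).trans hsq).add
    (hinv.const_mul_left (θ ^ 2 + 2 * b + b ^ 2))).congr_left fun n => sub_add_cancel _ _

lemma F_one_sub_div_sub_isBigO (b : ℝ) :
    (fun n : ℕ => F n (1 - b / n) -
        exp (-b) * (4 * π ^ 2 + 2 * b + b ^ 2 - 2 * b * exp b) * (n : ℝ)⁻¹) =O[atTop]
      (fun n : ℕ => (n : ℝ)⁻¹ ^ 2) := by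
  have hlinear := two_mul_one_sub_div_sub_cos_isBigO (2 * π) b
  have hpow : (fun n : ℕ => (1 - b / n) ^ (n - 1) - exp (-b)) =O[atTop]
      (fun n : ℕ => (n : ℝ)⁻¹) := by
    simpa only [neg_div, ← sub_eq_add_neg] using one_add_div_pow_sub_exp_isBigO (-b) 1
  have hpow_error : (fun n : ℕ => ((1 - b / n) ^ (n - 1) - exp (-b)) *
      powCofactor (cos (2 * π / n)) n (1 - b / n)) =O[atTop] (fun n : ℕ => (n : ℝ)⁻¹ ^ 2) := by
    simpa only [sq] using hpow.mul (powCofactor_one_sub_div_isBigO (2 * π) b)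
  have hcofactor := (powCofactor_one_sub_div_sub_isBigO (2 * π) b).const_mul_left (exp (-b))
  refine ((hlinear.add hpow_error).add hcofactor).congr' ?_ .rfl
  filter_upwards [eventually_ne_atTop 0] with n hn
  have hexp : exp (-b) * exp b = 1 := by rw [← exp_add, neg_add_cancel, exp_zero]
  rw [F_eq_add_pow_mul_powCofactor hn]
  linear_combination -2 * b * (n : ℝ)⁻¹ * hexp

/-- If `b₀` is the real root of `4π² + 2b + b² − 2b·e^b`, then `F_n(1 − b₀/n) = O(1/n²)`:
there is `C > 0` with `|F_n(1 − b₀/n)| ≤ C/n²` for all `n ≥ 3`. -/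
theorem F_at_root_is_O_inv_nsq (b₀ : ℝ)
    (hroot : 4 * π ^ 2 + 2 * b₀ + b₀ ^ 2 - 2 * b₀ * Real.exp b₀ = 0) :
    ∃ C : ℝ, 0 < C ∧ ∀ n : ℕ, 3 ≤ n → |F n (1 - b₀ / n)| ≤ C / n ^ 2 := by
  have hF : (fun n : ℕ => F n (1 - b₀ / n)) =O[atTop] (fun n : ℕ => (n : ℝ)⁻¹ ^ 2) := by
    simpa only [hroot, mul_zero, zero_mul, sub_zero] using F_one_sub_div_sub_isBigO b₀
  -- As `1 / n ^ 2` vanishes for no `n ≥ 1`, the finitely many small `n` only affect the constant.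
  obtain ⟨C, hC_pos, hC⟩ := bound_of_isBigO_nat_atTop hF
  refine ⟨C, hC_pos, fun n hn => ?_⟩
  have hn_ne : (n : ℝ)⁻¹ ^ 2 ≠ 0 := by positivity
  simpa only [norm_eq_abs, abs_pow, abs_inv, Nat.abs_cast, inv_pow, ← div_eq_mul_inv]
    using hC hn_ne
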